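/- arXiv:2504.10945 — 3 statements merged into one kernel-verified Lean document; each statement's English description precedes it below -/
import Mathlib

section
/- For every number of machines m ≥ 2 and every prediction error level α ≥ 1 with (m−1)α² ≥ 1, every non-clairvoyant algorithm for preemptive scheduling with prediction on m identical machines has competitive ratio at least 2 − 1/m + (1/m − 1)·(m−1)/⌊(m−1)α²⌋. -/
/-!
The lower bound comes from one adversarial family. Put `k = ⌊(m-1)α²⌋` and `L = k/(m-1)`, so that
`1 ≤ L ≤ α²`, and take `k + 1` jobs, all predicted to have length `α`. If every job has actual length
`1`, some job `i` finishes last, at a time `T ≥ (k+1)/m` because the machines have total speed `m`.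
Until `T` the algorithm cannot distinguish this run from the one where `i` alone has length `L`
(lemma `long_run_completion`), and in the latter run `L - 1` units of `i` remain at `T`, so the makespan
is at least `(k+1)/m + L - 1`. The long job alone on one machine, with the short jobs filling the
other `m - 1` machines, gives optimal makespan `L`, and the quotient
`1 + ((k+1)/m - 1)(m-1)/k` is exactly the claimed bound; `ε` only makes the inequality strict.
-/

/-!
Model for non-clairvoyant preemptive scheduling with prediction on `m` identical
machines.  A (deterministic) non-clairvoyant preemptive algorithm is described by the
amounts `w n q p j t` of each job `j` it has processed by time `t` when run on the
instance with predictions `q` and actual processing requirements `p`.  The amounts are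
nondecreasing, start at `0`, each job is processed at speed at most `1` (it cannot run
on two machines simultaneously), the total processing speed is at most `m`, a job is
never processed beyond its requirement, and every job eventually completes.
Non-clairvoyance: the run can depend on the actual processing times only through the
completions observed so far: if each job either has the same actual time in `p` and
`p'`, or is never completed before time `T` (its processed amount staying strictly below
both `p j` and `p' j`), then the runs on `(q, p)` and `(q, p')` coincide up to time `T`.
All requirements are imposed on valid instances, i.e. those with positive `p` and `q`. -/
structure PreAlg (m : ℕ) where
  w : (n : ℕ) → (Fin n → ℝ) → (Fin n → ℝ) → Fin n → ℝ → ℝ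
  w_zero : ∀ (n : ℕ) (q p : Fin n → ℝ), (∀ j, 0 < q j) → (∀ j, 0 < p j) →
    ∀ j, w n q p j 0 = 0
  w_mono : ∀ (n : ℕ) (q p : Fin n → ℝ), (∀ j, 0 < q j) → (∀ j, 0 < p j) →
    ∀ j, Monotone (w n q p j)
  w_speed_le_one : ∀ (n : ℕ) (q p : Fin n → ℝ), (∀ j, 0 < q j) → (∀ j, 0 < p j) →
    ∀ j s t, s ≤ t → w n q p j t - w n q p j s ≤ t - s
  w_total_speed : ∀ (n : ℕ) (q p : Fin n → ℝ), (∀ j, 0 < q j) → (∀ j, 0 < p j) →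
    ∀ s t, s ≤ t → ∑ j, (w n q p j t - w n q p j s) ≤ (m : ℝ) * (t - s)
  w_le : ∀ (n : ℕ) (q p : Fin n → ℝ), (∀ j, 0 < q j) → (∀ j, 0 < p j) →
    ∀ j t, w n q p j t ≤ p j
  completes : ∀ (n : ℕ) (q p : Fin n → ℝ), (∀ j, 0 < q j) → (∀ j, 0 < p j) →
    ∀ j, ∃ t, w n q p j t = p j
  nonclairvoyant : ∀ (n : ℕ) (q p p' : Fin n → ℝ), (∀ j, 0 < q j) → (∀ j, 0 < p j) →
    (∀ j, 0 < p' j) → ∀ T : ℝ,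
    (∀ j, p j = p' j ∨ ∀ s, s < T → w n q p j s < p j ∧ w n q p j s < p' j) →
    ∀ j t, t ≤ T → w n q p j t = w n q p' j t

/-- Completion time of job `j` in the run of the non-clairvoyant preemptive algorithm
`A` on the instance `(q, p)`. -/
noncomputable def preCompletion {m : ℕ} (A : PreAlg m) (n : ℕ) (q p : Fin n → ℝ)
    (j : Fin n) : ℝ :=
  sInf {t : ℝ | A.w n q p j t = p j}

/-- Makespan of the schedule produced by the non-clairvoyant preemptive algorithm `A`
on the instance `(q, p)`. -/
noncomputable def preMakespan {m : ℕ} (A : PreAlg m) (n : ℕ) (q p : Fin n → ℝ) : ℝ :=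
  sSup (Set.range (preCompletion A n q p))

/-- Optimal preemptive makespan on `m` identical machines:
`max (max_j p j) ((∑ j, p j) / m)`. -/
noncomputable def OPTpre (m n : ℕ) (p : Fin n → ℝ) : ℝ :=
  max (sSup (Set.range p)) ((∑ j, p j) / m)

/-- The prediction error of the instance `(p, q)` is at most `α`, i.e.
`max (p j / q j) (q j / p j) ≤ α` for every job `j` (stated multiplicatively). -/
def PredErrLe {n : ℕ} (α : ℝ) (p q : Fin n → ℝ) : Prop :=
  ∀ j, p j ≤ α * q j ∧ q j ≤ α * p j


lemma finished_nonneg {m : ℕ} (A : PreAlg m) {n : ℕ} {q p : Fin n → ℝ} (hq : ∀ j, 0 < q j)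
    (hp : ∀ j, 0 < p j) (j : Fin n) {t : ℝ} (ht : A.w n q p j t = p j) : 0 ≤ t := by
  by_contra! h
  have h1 := A.w_mono n q p hq hp j h.le
  rw [A.w_zero n q p hq hp j, ht] at h1
  exact absurd (hp j) (not_lt.mpr h1)

lemma bddBelow_finished {m : ℕ} (A : PreAlg m) {n : ℕ} {q p : Fin n → ℝ} (hq : ∀ j, 0 < q j)
    (hp : ∀ j, 0 < p j) (j : Fin n) : BddBelow {t : ℝ | A.w n q p j t = p j} :=
  ⟨0, fun _ ht => finished_nonneg A hq hp j ht⟩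

/-- The infimum defining the completion time is attained, because the processed amount is
`1`-Lipschitz in time. -/
lemma w_preCompletion {m : ℕ} (A : PreAlg m) {n : ℕ} {q p : Fin n → ℝ} (hq : ∀ j, 0 < q j)
    (hp : ∀ j, 0 < p j) (j : Fin n) : A.w n q p j (preCompletion A n q p j) = p j := by
  refine le_antisymm (A.w_le n q p hq hp j _) (le_of_forall_pos_le_add fun δ hδ => ?_)
  obtain ⟨t, ht, htlt⟩ := exists_lt_of_csInf_lt
    (s := {t : ℝ | A.w n q p j t = p j}) (A.completes n q p hq hp j)
    (show sInf {t : ℝ | A.w n q p j t = p j} < preCompletion A n q p j + δ from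
      lt_add_of_pos_right _ hδ)
  have hle : preCompletion A n q p j ≤ t := csInf_le (bddBelow_finished A hq hp j) ht
  have h := A.w_speed_le_one n q p hq hp j _ t hle
  simp only [Set.mem_ofPred_eq] at ht
  linarith

lemma w_lt_of_lt_preCompletion {m : ℕ} (A : PreAlg m) {n : ℕ} {q p : Fin n → ℝ}
    (hq : ∀ j, 0 < q j) (hp : ∀ j, 0 < p j) (j : Fin n) {t : ℝ}
    (ht : t < preCompletion A n q p j) : A.w n q p j t < p j :=
  lt_of_le_of_ne (A.w_le n q p hq hp j t) fun h =>
    absurd (csInf_le (bddBelow_finished A hq hp j) h) (not_le.mpr ht)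

/-- By the time `T` at which all jobs are finished, the total speed bound forces `∑ p ≤ m T`. -/
lemma sum_le_of_preCompletion_le {m : ℕ} (A : PreAlg m) {n : ℕ} {q p : Fin n → ℝ}
    (hq : ∀ j, 0 < q j) (hp : ∀ j, 0 < p j) {T : ℝ} (hT0 : 0 ≤ T)
    (hT : ∀ j, preCompletion A n q p j ≤ T) : ∑ j, p j ≤ m * T := by
  have h := A.w_total_speed n q p hq hp 0 T hT0
  have h2 : ∑ j, p j ≤ ∑ j, (A.w n q p j T - A.w n q p j 0) := by
    refine Finset.sum_le_sum fun j _ => ?_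
    have h3 := A.w_mono n q p hq hp j (hT j)
    rw [w_preCompletion A hq hp j] at h3
    rw [A.w_zero n q p hq hp j]
    linarith
  simpa using h2.trans h

/-- Lengthening a single job `i` to `L` is invisible to the algorithm until the original
completion time of `i`; the additional length can only be processed after that time. -/
lemma long_run_completion {m : ℕ} (A : PreAlg m) {n : ℕ} {q p : Fin n → ℝ}
    (hq : ∀ j, 0 < q j) (hp : ∀ j, 0 < p j) (i : Fin n) {L : ℝ} (hL : p i ≤ L) :
    preCompletion A n q p i + (L - p i) ≤ preCompletion A n q (Function.update p i L) i := by
  set p' := Function.update p i L with hp'def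
  set T := preCompletion A n q p i with hTdef
  have hp'i : p' i = L := by simp [hp'def]
  have hp' : ∀ j, 0 < p' j := by
    intro j
    by_cases hj : j = i
    · subst hj; rw [hp'i]; exact (hp j).trans_le hL
    · simpa [hp'def, hj] using hp j
  have hagree : ∀ t, t ≤ T → A.w n q p i t = A.w n q p' i t := by
    refine A.nonclairvoyant n q p p' hq hp hp' T (fun j => ?_) i
    by_cases hj : j = i
    · subst hj
      refine Or.inr fun s hs => ?_
      have h := w_lt_of_lt_preCompletion A hq hp j hs
      exact ⟨h, by rw [hp'i]; exact h.trans_le hL⟩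
    · exact Or.inl (by simp [hp'def, hj])
  refine le_csInf (A.completes n q p' hq hp' i) fun t ht => ?_
  simp only [Set.mem_ofPred_eq, hp'i] at ht
  rcases lt_or_ge t T with h | h
  · have h1 := w_lt_of_lt_preCompletion A hq hp i h
    rw [hagree t h.le, ht] at h1
    exact absurd h1 (not_lt.mpr hL)
  · have h1 := A.w_speed_le_one n q p' hq hp' i T t h
    rw [ht, ← hagree T le_rfl, w_preCompletion A hq hp i] at h1
    linarith

/-- For every `m ≥ 2` and every `α ≥ 1` with `(m−1)α² ≥ 1`, every non-clairvoyant
algorithm for preemptive scheduling with prediction on `m` identical machines has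
competitive ratio at least `2 − 1/m + (1/m − 1)·(m−1)/⌊(m−1)α²⌋`. -/
theorem pre_lower_bound_floor (m : ℕ) (hm : 2 ≤ m) (α : ℝ) (hα : 1 ≤ α)
    (hfloor : 1 ≤ ((m : ℝ) - 1) * α ^ 2) (A : PreAlg m) (ε : ℝ) (hε : 0 < ε) :
    ∃ (n : ℕ) (p q : Fin n → ℝ),
      (∀ j, 0 < p j) ∧ (∀ j, 0 < q j) ∧ PredErrLe α p q ∧
      (2 - 1 / (m : ℝ) + (1 / (m : ℝ) - 1) * (((m : ℝ) - 1) / (⌊((m : ℝ) - 1) * α ^ 2⌋ : ℝ))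
          - ε) * OPTpre m n p
        < preMakespan A n q p := by
  have hm2 : (2 : ℝ) ≤ m := by exact_mod_cast hm
  have hm1 : (0 : ℝ) < (m : ℝ) - 1 := by linarith
  have hα0 : 0 < α := by linarith
  obtain ⟨k, hk⟩ : ∃ k : ℕ, ⌊((m : ℝ) - 1) * α ^ 2⌋ = (k : ℤ) :=
    Int.eq_ofNat_of_zero_le (Int.floor_nonneg.mpr (by linarith))
  have hkle : (k : ℝ) ≤ ((m : ℝ) - 1) * α ^ 2 := by
    have h := Int.floor_le (((m : ℝ) - 1) * α ^ 2)
    rw [hk] at h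
    exact_mod_cast h
  -- `m - 1` is an integer below `(m-1)α²`, hence below the floor.
  have hkm : (m : ℝ) - 1 ≤ k := by
    have h : ((m : ℤ) - 1) ≤ ⌊((m : ℝ) - 1) * α ^ 2⌋ := by
      rw [Int.le_floor]
      push_cast
      exact le_mul_of_one_le_right hm1.le (one_le_pow₀ hα)
    rw [hk] at h
    exact_mod_cast h
  have hk0 : (0 : ℝ) < k := by linarith
  set L : ℝ := k / ((m : ℝ) - 1) with hLdef
  have hL1 : 1 ≤ L := (one_le_div hm1).mpr hkm
  have hLα : L ≤ α * α := by
    rw [hLdef, div_le_iff₀ hm1]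
    nlinarith
  have hLm : L * ((m : ℝ) - 1) = k := div_mul_cancel₀ _ hm1.ne'
  set q : Fin (k + 1) → ℝ := fun _ => α with hqdef
  set p : Fin (k + 1) → ℝ := fun _ => 1 with hpdef
  have hq : ∀ j, 0 < q j := fun _ => hα0
  have hp : ∀ j, 0 < p j := fun _ => one_pos
  obtain ⟨i, hi⟩ := Finite.exists_max (preCompletion A (k + 1) q p)
  set T := preCompletion A (k + 1) q p i with hTdef
  have hT : (k : ℝ) + 1 ≤ m * T := by
    have h := sum_le_of_preCompletion_le A hq hp
      (finished_nonneg A hq hp i (w_preCompletion A hq hp i)) hi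
    simpa [hpdef] using h
  have hlong := long_run_completion A hq hp i (L := L) hL1
  set p' := Function.update p i L with hp'def
  have hp'cases : ∀ j, p' j = 1 ∨ p' j = L := by
    intro j
    by_cases hj : j = i
    · subst hj; exact Or.inr (by simp [hp'def])
    · exact Or.inl (by simp [hp'def, hj, hpdef])
  have hp'1 : ∀ j, 1 ≤ p' j := fun j => by rcases hp'cases j with h | h <;> rw [h]; exact hL1
  have hp'L : ∀ j, p' j ≤ L := fun j => by rcases hp'cases j with h | h <;> rw [h]; exact hL1
  have hOPT : OPTpre m (k + 1) p' = L := by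
    have hsum : ∑ j, p' j = k + L := by
      rw [hp'def, Finset.sum_update_of_mem (Finset.mem_univ i)]
      simp [hpdef, Finset.card_sdiff, add_comm]
    have hdiv : (∑ j, p' j) / m = L := by
      rw [hsum, div_eq_iff (by linarith)]
      linarith
    rw [OPTpre, hdiv]
    refine max_eq_right (csSup_le (Set.range_nonempty _) ?_)
    rintro _ ⟨j, rfl⟩
    exact hp'L j
  refine ⟨k + 1, p', q, fun j => one_pos.trans_le (hp'1 j), hq,
    fun j => ⟨(hp'L j).trans hLα, le_mul_of_one_le_right hα0.le (hp'1 j)⟩, ?_⟩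
  have hmk : T + (L - 1) ≤ preMakespan A (k + 1) q p' :=
    hlong.trans (le_csSup (Set.finite_range _).bddAbove ⟨i, rfl⟩)
  have hT' : ((k : ℝ) + 1) / m ≤ T := by
    rw [div_le_iff₀ (by linarith)]
    linarith
  have hbound : (2 - 1 / (m : ℝ) + (1 / (m : ℝ) - 1) * (((m : ℝ) - 1) / k)) * L
      = ((k : ℝ) + 1) / m + (L - 1) := by
    have hm0 : (m : ℝ) ≠ 0 := by linarith
    have := hm1.ne'
    rw [hLdef]
    field_simp
    ring
  have hεL : 0 < ε * L := mul_pos hε (by linarith)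
  rw [hOPT, hk, Int.cast_natCast, sub_mul, hbound]
  linarith
end

section
/- For every number of machines m ≥ 2 and every prediction error level α ≥ 1, and for every instance of preemptive non-clairvoyant scheduling with prediction on m identical machines whose prediction error is at most α, the makespan of the schedule produced by the PPRR algorithm is at most (2 − 1/m − (m−1)/(m α²)) times the optimal preemptive makespan. -/
open scoped Classical in
/-- One event step of the PPRR (Predicted Proportional Round Robin) algorithm on `m`
identical machines with predictions `q`.  The state `(t, r, mand, C)` consists of the
current time `t`, the remaining processing requirements `r`, the set `mand` of jobs
currently designated as mandatory, and the completion times `C` recorded so far.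
The step computes the number `g` of unoccupied machines, sorts the uncompleted
non-mandatory jobs in non-increasing order of predicted processing times, determines the
number `d` of newly mandatory jobs (the largest `k` with `1 ≤ k ≤ min g h` such that
`(g − k)·q_{j_k} ≥ ∑_{i>k} q_{j_i}`), designates the first `d` jobs as mandatory (each
occupying its own machine, processed at speed `1`), processes the remaining jobs
alternately on the remaining `g − d` machines, job `j` at speed
`(g − d)·q j / (∑ remaining q)`, and advances time to the next job completion. -/
noncomputable def pprrStep (m n : ℕ) (q : Fin n → ℝ)
    (st : ℝ × (Fin n → ℝ) × Finset (Fin n) × (Fin n → ℝ)) :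
    ℝ × (Fin n → ℝ) × Finset (Fin n) × (Fin n → ℝ) :=
  let t := st.1
  let r := st.2.1
  let mand := st.2.2.1
  let C := st.2.2.2
  let U : Finset (Fin n) := Finset.univ.filter fun j => 0 < r j
  if hU : U.Nonempty then
    let mand' := mand ∩ U
    let nonmand := U \ mand'
    let g : ℕ := m - mand'.card
    let L : List (Fin n) :=
      (nonmand.sort (· ≤ ·)).mergeSort fun a b => decide (q b < q a ∨ (q a = q b ∧ a ≤ b))
    let cond : ℕ → Prop := fun k =>
      ∃ hk : k - 1 < L.length, ((g : ℝ) - k) * q (L.get ⟨k - 1, hk⟩) ≥ ((L.drop k).map q).sum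
    let d : ℕ := ((Finset.Icc 1 (min g L.length)).filter cond).sup id
    let newMand := mand' ∪ (L.take d).toFinset
    let Q : ℝ := ((L.drop d).map q).sum
    let speed : Fin n → ℝ := fun j =>
      if j ∈ newMand then 1 else if j ∈ U then ((g : ℝ) - d) * q j / Q else 0
    let Δ : ℝ := U.inf' hU fun j => r j / speed j
    let r' : Fin n → ℝ := fun j => if j ∈ U then r j - speed j * Δ else r j
    let C' : Fin n → ℝ := fun j => if j ∈ U ∧ r' j ≤ 0 then t + Δ else C j
    (t + Δ, r', newMand, C')
  else st

/-- The final state of the PPRR algorithm on the instance `(q, p)` on `m` identical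
machines: the simulation starts at time `0` with remaining requirements `p`, no
mandatory jobs and no recorded completion times, and performs `n` event steps (at least
one job completes at each event, so `n` steps suffice to complete all jobs). -/
noncomputable def pprrFinal (m n : ℕ) (q p : Fin n → ℝ) :
    ℝ × (Fin n → ℝ) × Finset (Fin n) × (Fin n → ℝ) :=
  (pprrStep m n q)^[n] (0, p, ∅, fun _ => 0)

/-- Makespan of the schedule produced by the PPRR algorithm on `m` identical machines
on the instance `(q, p)`: the largest recorded completion time. -/
noncomputable def pprrMakespan (m n : ℕ) (q p : Fin n → ℝ) : ℝ :=
  sSup (Set.range (pprrFinal m n q p).2.2.2)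


/-- The set-based form of the state after one event: `D` is the set of newly mandatory jobs. -/
noncomputable def setStep (m n : ℕ) (q : Fin n → ℝ) (t : ℝ) (r : Fin n → ℝ)
    (mand : Finset (Fin n)) (C : Fin n → ℝ) (D : Finset (Fin n))
    (hU : (Finset.univ.filter fun j => 0 < r j).Nonempty) :
    ℝ × (Fin n → ℝ) × Finset (Fin n) × (Fin n → ℝ) :=
  let U : Finset (Fin n) := Finset.univ.filter fun j => 0 < r j
  let newMand := (mand ∩ U) ∪ D
  let speed : Fin n → ℝ := fun j =>
    if j ∈ newMand then 1 else if j ∈ U then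
      (((m - (mand ∩ U).card : ℕ) : ℝ) - D.card) * q j / ∑ i ∈ U \ newMand, q i else 0
  let Δ : ℝ := U.inf' hU fun j => r j / speed j
  let r' : Fin n → ℝ := fun j => if j ∈ U then r j - speed j * Δ else r j
  (t + Δ, r', newMand, fun j => if j ∈ U ∧ r' j ≤ 0 then t + Δ else C j)

/-- The conditions under which a set `D` of uncompleted non-mandatory jobs may be designated
as mandatory: it fits on the unoccupied machines, and if it is nonempty, its smallest
prediction passes the threshold test of the algorithm. -/
structure Designates (m n : ℕ) (q r : Fin n → ℝ) (mand D : Finset (Fin n)) : Prop where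
  sub : ∀ j ∈ D, 0 < r j ∧ j ∉ mand
  card_le : D.card ≤ m - (mand ∩ Finset.univ.filter fun j => 0 < r j).card
  threshold : D = ∅ ∨ ∃ x ∈ D, (∀ j ∈ D, q x ≤ q j) ∧
    ∑ i ∈ (Finset.univ.filter fun j => 0 < r j) \
        ((mand ∩ Finset.univ.filter fun j => 0 < r j) ∪ D), q i ≤
      (((m - (mand ∩ Finset.univ.filter fun j => 0 < r j).card : ℕ) : ℝ) - D.card) * q x

lemma pprrStep_of_not_nonempty (m n : ℕ) (q : Fin n → ℝ)
    (st : ℝ × (Fin n → ℝ) × Finset (Fin n) × (Fin n → ℝ))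
    (hU : ¬ (Finset.univ.filter fun j => 0 < st.2.1 j).Nonempty) :
    pprrStep m n q st = st := by
  classical
  unfold pprrStep
  simp only
  rw [dif_neg]
  convert hU

/-- One event of the algorithm is a set-based step: the first `d` jobs in the order of the
algorithm form a designated set, and only this set and its cardinality matter. -/
lemma pprrStep_spec (m n : ℕ) (q : Fin n → ℝ) (t : ℝ) (r : Fin n → ℝ)
    (mand : Finset (Fin n)) (C : Fin n → ℝ)
    (hU : (Finset.univ.filter fun j => 0 < r j).Nonempty) :
    ∃ D, Designates m n q r mand D ∧
      pprrStep m n q (t, r, mand, C) = setStep m n q t r mand C D hU := by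
  classical
  set U : Finset (Fin n) := Finset.univ.filter fun j => 0 < r j with hUdef
  set N := U \ (mand ∩ U) with hN
  set g : ℕ := m - (mand ∩ U).card with hg
  set L : List (Fin n) :=
    (N.sort (· ≤ ·)).mergeSort fun a b => decide (q b < q a ∨ (q a = q b ∧ a ≤ b)) with hL
  set cond : ℕ → Prop := fun k =>
    ∃ hk : k - 1 < L.length,
      ((g : ℝ) - k) * q (L.get ⟨k - 1, hk⟩) ≥ ((L.drop k).map q).sum with hcond
  set d : ℕ := ((Finset.Icc 1 (min g L.length)).filter cond).sup id with hd
  have hperm : L.Perm (N.sort (· ≤ ·)) := List.mergeSort_perm _ _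
  have hnodup : L.Nodup := hperm.nodup_iff.2 (Finset.sort_nodup _ _)
  have hmem : ∀ j, j ∈ L ↔ j ∈ N := fun j => by
    rw [hperm.mem_iff, Finset.mem_sort]
  have hsorted : L.Pairwise fun a b => q b ≤ q a := by
    have := List.pairwise_mergeSort
      (le := fun a b : Fin n => decide (q b < q a ∨ (q a = q b ∧ a ≤ b)))
      (by
        intro a b c hab hbc
        simp only [decide_eq_true_eq] at *
        rcases hab with h | ⟨h, h'⟩ <;> rcases hbc with k | ⟨k, k'⟩
        · left; linarith
        · left; linarith
        · left; linarith
        · right; exact ⟨by linarith, h'.trans k'⟩)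
      (by
        intro a b
        simp only [Bool.or_eq_true, decide_eq_true_eq]
        rcases lt_trichotomy (q a) (q b) with h | h | h
        · right; left; exact h
        · rcases le_total a b with k | k
          · left; right; exact ⟨h, k⟩
          · right; right; exact ⟨h.symm, k⟩
        · left; left; exact h)
      (N.sort (· ≤ ·))
    refine List.Pairwise.imp ?_ this
    intro a b h
    simp only [decide_eq_true_eq] at h
    rcases h with h | h
    · exact h.le
    · exact h.1.ge
  have hdspec : d = 0 ∨ (1 ≤ d ∧ d ≤ min g L.length ∧ cond d) := by
    by_cases he : ((Finset.Icc 1 (min g L.length)).filter cond).Nonempty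
    · right
      obtain ⟨k, hk, hk'⟩ := Finset.exists_mem_eq_sup _ he (id : ℕ → ℕ)
      have hkd : k = d := by rw [hd, hk']; rfl
      subst hkd
      simp only [Finset.mem_filter, Finset.mem_Icc] at hk
      exact ⟨hk.1.1, hk.1.2, hk.2⟩
    · left
      rw [Finset.not_nonempty_iff_eq_empty] at he
      rw [hd, he]; rfl
  have hdlen : d ≤ L.length := by
    rcases hdspec with h | ⟨_, h, _⟩
    · omega
    · exact h.trans (min_le_right _ _)
  have hdg : d ≤ g := by
    rcases hdspec with h | ⟨_, h, _⟩
    · omega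
    · exact h.trans (min_le_left _ _)
  set D := (L.take d).toFinset with hD
  have hDcard : D.card = d := by
    rw [hD, List.toFinset_card_of_nodup (hnodup.sublist (List.take_sublist _ _)),
      List.length_take, min_eq_left hdlen]
  have htd := List.take_append_drop d L
  have hdisj : ∀ j ∈ L.take d, j ∉ L.drop d := by
    have := hnodup
    rw [← htd, List.nodup_append'] at this
    exact fun j hj hj' => this.2.2 hj hj'
  have hmem' : ∀ j, j ∈ N ↔ j ∈ L.take d ∨ j ∈ L.drop d := fun j => by
    rw [← hmem, ← List.mem_append, htd]
  have hR : U \ ((mand ∩ U) ∪ D) = (L.drop d).toFinset := by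
    ext j
    have h1 := hmem' j
    have h2 := hdisj j
    simp only [hN, hD, Finset.mem_sdiff, Finset.mem_union, List.mem_toFinset] at h1 ⊢
    constructor
    · rintro ⟨ha, hb⟩
      rw [not_or] at hb
      exact (h1.1 ⟨ha, hb.1⟩).resolve_left hb.2
    · intro hc
      obtain ⟨ha, hb⟩ := h1.2 (Or.inr hc)
      exact ⟨ha, fun hh => hh.elim hb fun hj => h2 hj hc⟩
  have hsum : ((L.drop d).map q).sum = ∑ i ∈ U \ ((mand ∩ U) ∪ D), q i := by
    rw [hR, List.sum_toFinset _ (hnodup.sublist (List.drop_sublist _ _))]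
  refine ⟨D, ⟨?_, ?_, ?_⟩, ?_⟩
  · intro j hj
    have : j ∈ N := (hmem' j).2 (Or.inl (List.mem_toFinset.1 hj))
    simp only [hN, hUdef, Finset.mem_sdiff, Finset.mem_inter, Finset.mem_filter,
      Finset.mem_univ, true_and] at this
    exact ⟨this.1, fun hm => this.2 ⟨hm, this.1⟩⟩
  · rw [hDcard]; exact hdg
  · rcases hdspec with h | ⟨h1, h2, hk, hc⟩
    · left
      rw [← Finset.card_eq_zero, hDcard, h]
    · right
      refine ⟨L.get ⟨d - 1, hk⟩, ?_, ?_, ?_⟩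
      · rw [hD, List.mem_toFinset, List.mem_take_iff_getElem]
        exact ⟨d - 1, by omega, rfl⟩
      · intro j hj
        rw [hD, List.mem_toFinset, List.mem_take_iff_getElem] at hj
        obtain ⟨i, hi, rfl⟩ := hj
        rcases eq_or_lt_of_le (show i ≤ d - 1 by omega) with h | h
        · subst h; exact le_rfl
        · exact List.pairwise_iff_getElem.1 hsorted i (d - 1) (by omega) hk h
      · rw [hDcard, ← hsum]; exact hc
  · unfold pprrStep setStep
    simp only
    rw [dif_pos (by convert hU)]
    rw [hDcard, ← hsum]

/-- Total rate at which work is done: with some proportional job left, all `m` machines work. -/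
lemma sum_speed {n : ℕ} (q : Fin n → ℝ) (U M : Finset (Fin n)) (hM : M ⊆ U) (c : ℝ)
    (hQ : ∑ i ∈ U \ M, q i ≠ 0) :
    ∑ j ∈ U, (if j ∈ M then 1 else if j ∈ U then c * q j / ∑ i ∈ U \ M, q i else 0)
      = M.card + c := by
  rw [← Finset.sum_sdiff hM]
  have h1 : ∑ j ∈ M, (if j ∈ M then (1 : ℝ) else
      if j ∈ U then c * q j / ∑ i ∈ U \ M, q i else 0) = M.card := by
    rw [Finset.sum_congr rfl (g := fun _ => (1 : ℝ)) (fun j hj => by rw [if_pos hj])]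
    simp
  have h2 : ∑ j ∈ U \ M, (if j ∈ M then (1 : ℝ) else
      if j ∈ U then c * q j / ∑ i ∈ U \ M, q i else 0) = c := by
    rw [Finset.sum_congr rfl (g := fun j => c / (∑ i ∈ U \ M, q i) * q j) (fun j hj => by
      rw [Finset.mem_sdiff] at hj
      rw [if_neg hj.2, if_pos hj.1]; ring), ← Finset.mul_sum]
    field_simp
  rw [h1, h2]; ring

/-- The part of the invariant valid while some non-mandatory job is uncompleted: `lam` is the
common level `(p j - r j) / q j` of the non-mandatory jobs and `rho` a lower bound for its
future growth rate. -/
structure Proportional (m n : ℕ) (α : ℝ) (p q : Fin n → ℝ) (t : ℝ) (r : Fin n → ℝ)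
    (mand : Finset (Fin n)) (lam rho : ℝ) : Prop where
  rho_nonneg : 0 ≤ rho
  free : (mand ∩ Finset.univ.filter fun j => 0 < r j).card < m
  work : ∑ j, (p j - r j) = m * t
  level : (t = 0 ∧ lam = 0) ∨ 1 ≤ α * lam
  nonmand : ∀ j, 0 < r j → j ∉ mand → p j - r j = lam * q j
  mandatory : ∀ j ∈ mand, 0 < r j → p j - r j ≤ lam * q j ∧ 1 ≤ rho * q j
  rate : rho * ∑ j ∈ (Finset.univ.filter fun j => 0 < r j) \
      (mand ∩ Finset.univ.filter fun j => 0 < r j), q j ≤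
    m - (mand ∩ Finset.univ.filter fun j => 0 < r j).card

/-- The invariant of the simulation, `B` being the claimed bound on the makespan. -/
structure PInv (m n : ℕ) (α B : ℝ) (p q : Fin n → ℝ) (t : ℝ) (r : Fin n → ℝ)
    (mand : Finset (Fin n)) (C : Fin n → ℝ) : Prop where
  card_le : mand.card ≤ m
  r_nonneg : ∀ j, 0 ≤ r j
  C_le : ∀ j, C j ≤ B
  mand_le : ∀ j ∈ mand, 0 < r j → t + r j ≤ B
  prop : (∃ j, 0 < r j ∧ j ∉ mand) → ∃ lam rho, Proportional m n α p q t r mand lam rho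

/-- Starting at level at least `1 / α` and having kept all machines busy, a job that runs
alone on a machine from time `t` on finishes within the bound. -/
lemma finish_le {m : ℕ} (hm : 2 ≤ m) {α : ℝ} (hα : 1 ≤ α) {P O lam t p q r : ℝ}
    (hP : P ≤ m * O) (hpO : p ≤ O) (hw : m * t + r ≤ P) (hl : 1 ≤ α * lam)
    (hr : p - r = lam * q) (hq : 0 < q) (hpq : p ≤ α * q) :
    t + r ≤ (2 - 1 / (m : ℝ) - ((m : ℝ) - 1) / ((m : ℝ) * α ^ 2)) * O := by
  have hm' : (2 : ℝ) ≤ m := by exact_mod_cast hm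
  have hα2 : 0 < α ^ 2 := by positivity
  have h1 : p ≤ α ^ 2 * (p - r) := by
    rw [hr]
    nlinarith [mul_le_mul_of_nonneg_right hl (mul_nonneg (by linarith : (0:ℝ) ≤ α) hq.le)]
  have h2 : r ≤ (1 - 1 / α ^ 2) * O := by
    have h3 : p / α ^ 2 ≤ p - r := by rw [div_le_iff₀ hα2]; linarith
    have h4 : 1 / α ^ 2 ≤ 1 := by rw [div_le_one hα2]; nlinarith
    have h5 : (1 - 1 / α ^ 2) * p ≤ (1 - 1 / α ^ 2) * O :=
      mul_le_mul_of_nonneg_left hpO (by linarith)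
    have h6 : (1 - 1 / α ^ 2) * p = p - p / α ^ 2 := by ring
    linarith
  have h3 : m * (t + r) ≤ m * O + (m - 1) * ((1 - 1 / α ^ 2) * O) := by
    nlinarith [mul_le_mul_of_nonneg_left h2 (by linarith : (0:ℝ) ≤ m - 1)]
  have h4 : (2 - 1 / (m : ℝ) - ((m : ℝ) - 1) / ((m : ℝ) * α ^ 2)) * O
      = (m * O + (m - 1) * ((1 - 1 / α ^ 2) * O)) / m := by
    field_simp; ring
  rw [h4, le_div_iff₀ (by linarith)]
  linarith

/-- One event preserves the invariant. -/
lemma PInv.step {m n : ℕ} (hm : 2 ≤ m) {α O : ℝ} (hα : 1 ≤ α) {p q : Fin n → ℝ}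
    (hq : ∀ j, 0 < q j) (herr : PredErrLe α p q)
    (hPO : ∑ j, p j ≤ m * O) (hpO : ∀ j, p j ≤ O)
    {B : ℝ} (hB : B = (2 - 1 / (m : ℝ) - ((m : ℝ) - 1) / ((m : ℝ) * α ^ 2)) * O) (hOB : O ≤ B)
    {t : ℝ} {r : Fin n → ℝ} {mand : Finset (Fin n)} {C : Fin n → ℝ}
    (h : PInv m n α B p q t r mand C) {D : Finset (Fin n)}
    (hD : Designates m n q r mand D)
    (hU : (Finset.univ.filter fun j => 0 < r j).Nonempty) :
    PInv m n α B p q (setStep m n q t r mand C D hU).1 (setStep m n q t r mand C D hU).2.1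
      (setStep m n q t r mand C D hU).2.2.1 (setStep m n q t r mand C D hU).2.2.2 := by
  classical
  obtain ⟨hDsub, hDcard, hDthr⟩ := hD
  unfold setStep
  simp only
  set U : Finset (Fin n) := Finset.univ.filter fun j => 0 < r j with hUdef
  have hmU : ∀ j, j ∈ U ↔ 0 < r j := fun j => by simp [hUdef]
  set M := (mand ∩ U) ∪ D with hMdef
  set g : ℕ := m - (mand ∩ U).card with hg
  set Q : ℝ := ∑ i ∈ U \ M, q i with hQdef
  set speed : Fin n → ℝ := fun j =>
    if j ∈ M then 1 else if j ∈ U then ((g : ℝ) - D.card) * q j / Q else 0 with hspeed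
  set Δ : ℝ := U.inf' hU fun j => r j / speed j with hΔ
  set r' : Fin n → ℝ := fun j => if j ∈ U then r j - speed j * Δ else r j with hr'
  have hcard0 : (mand ∩ U).card ≤ m :=
    (Finset.card_le_card Finset.inter_subset_left).trans h.card_le
  have hgR : (g : ℝ) = m - (mand ∩ U).card := by rw [hg, Nat.cast_sub hcard0]
  have hDU : D ⊆ U := fun j hj => (hmU j).2 (hDsub j hj).1
  have hMU : M ⊆ U := Finset.union_subset Finset.inter_subset_right hDU
  have hdisj : Disjoint (mand ∩ U) D := by
    rw [Finset.disjoint_left]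
    intro j hj hj'
    exact (hDsub j hj').2 (Finset.mem_inter.1 hj).1
  have hMcard : M.card = (mand ∩ U).card + D.card := Finset.card_union_of_disjoint hdisj
  have hMm : M.card ≤ m := by omega
  have hMR : (M.card : ℝ) = m - g + D.card := by rw [hMcard, hgR]; push_cast; ring
  have hQnn : 0 ≤ Q := Finset.sum_nonneg fun i _ => (hq i).le
  have hQpos : (U \ M).Nonempty → 0 < Q := fun hne => Finset.sum_pos (fun i _ => hq i) hne
  have hNex : ∀ j, j ∈ U → j ∉ mand ∩ U → ∃ j, 0 < r j ∧ j ∉ mand := fun j h1 h2 =>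
    ⟨j, (hmU j).1 h1, fun h3 => h2 (Finset.mem_inter.2 ⟨h3, h1⟩)⟩
  -- with proportional jobs left, some machine is left for them
  have hfree : (U \ M).Nonempty → 0 < (g : ℝ) - D.card := by
    rintro hne
    have hQ := hQpos hne
    obtain ⟨j, hj⟩ := hne
    rw [Finset.mem_sdiff, hMdef, Finset.mem_union, not_or] at hj
    obtain ⟨lam, rho, hpr⟩ := h.prop (hNex j hj.1 hj.2.1)
    rcases hDthr with hE | ⟨x, hx, -, hx2⟩
    · have := hpr.free
      rw [← hUdef] at this
      have h0 : 0 < g := by omega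
      rw [hE]; simpa using h0
    · by_contra hneg
      have := mul_nonpos_of_nonpos_of_nonneg (not_lt.1 hneg) (hq x).le
      linarith
  have hspos : ∀ j ∈ U, 0 < speed j := by
    intro j hj
    simp only [hspeed]
    by_cases hjM : j ∈ M
    · rw [if_pos hjM]; exact one_pos
    · rw [if_neg hjM, if_pos hj]
      have hne : (U \ M).Nonempty := ⟨j, Finset.mem_sdiff.2 ⟨hj, hjM⟩⟩
      exact div_pos (mul_pos (hfree hne) (hq j)) (hQpos hne)
  have hΔle : ∀ j ∈ U, speed j * Δ ≤ r j := by
    intro j hj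
    have : Δ ≤ r j / speed j := Finset.inf'_le _ hj
    rw [le_div_iff₀ (hspos j hj)] at this
    linarith
  obtain ⟨i0, hi0U, hi0⟩ := Finset.exists_mem_eq_inf' hU fun j => r j / speed j
  have hi0' : r' i0 = 0 := by
    simp only [hr']
    rw [if_pos hi0U, hΔ, hi0]
    have := (hspos i0 hi0U).ne'
    field_simp; ring
  have hΔnn : 0 ≤ Δ := by
    rw [hΔ, hi0]; exact div_nonneg (h.r_nonneg _) (hspos _ hi0U).le
  have hr'nn : ∀ j, 0 ≤ r' j := by
    intro j
    simp only [hr']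
    split_ifs with hj
    · linarith [hΔle j hj]
    · exact h.r_nonneg j
  have hr'U : ∀ j, 0 < r' j → j ∈ U := by
    intro j hj
    by_contra hjU
    simp only [hr', if_neg hjU] at hj
    exact hjU ((hmU j).2 hj)
  -- jobs mandatory after the designation finish within the bound
  have hmand : ∀ j ∈ M, t + r j ≤ B := by
    intro j hj
    rcases Finset.mem_union.1 hj with hj | hj
    · rw [Finset.mem_inter] at hj
      exact h.mand_le j hj.1 ((hmU j).1 hj.2)
    · obtain ⟨hrj, hjm⟩ := hDsub j hj
      obtain ⟨lam, rho, hpr⟩ := h.prop ⟨j, hrj, hjm⟩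
      have hpj := hpr.nonmand j hrj hjm
      rcases hpr.level with ⟨ht, hl⟩ | hl
      · rw [hl, zero_mul] at hpj
        rw [ht]
        linarith [hpO j]
      · have hs : r j ≤ ∑ i, r i :=
          Finset.single_le_sum (fun i _ => h.r_nonneg i) (Finset.mem_univ j)
        have hw := hpr.work
        rw [Finset.sum_sub_distrib] at hw
        rw [hB]
        exact finish_le hm hα hPO (hpO j) (by linarith) hl hpj (hq j) (herr j).1
  have hΔM : ∀ j ∈ M, Δ ≤ r j := by
    intro j hj
    have := hΔle j (hMU hj)
    simp only [hspeed, if_pos hj] at this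
    linarith
  -- the total work after the step, while proportional jobs run
  have hwork : (U \ M).Nonempty → ∑ j, (p j - r' j) = m * (t + Δ) := by
    intro hne
    have hQ := hQpos hne
    obtain ⟨j, hj⟩ := hne
    rw [Finset.mem_sdiff, hMdef, Finset.mem_union, not_or] at hj
    obtain ⟨lam, rho, hpr⟩ := h.prop (hNex j hj.1 hj.2.1)
    have h1 : ∑ j ∈ U, speed j = m := by
      rw [show (m : ℝ) = M.card + (g - D.card) by rw [hMR]; ring]
      exact sum_speed q U M hMU _ hQ.ne'
    have h2 : ∀ j, p j - r' j = (p j - r j) + (if j ∈ U then speed j * Δ else 0) := by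
      intro j
      simp only [hr']
      split_ifs <;> ring
    rw [Finset.sum_congr rfl fun j _ => h2 j, Finset.sum_add_distrib, hpr.work,
      Finset.sum_ite_mem, Finset.univ_inter, ← Finset.sum_mul, h1]
    ring
  have htB : t + Δ ≤ B := by
    by_cases hi : i0 ∈ M
    · linarith [hmand i0 hi, hΔM i0 hi]
    · have hw := hwork ⟨i0, Finset.mem_sdiff.2 ⟨hi0U, hi⟩⟩
      rw [Finset.sum_sub_distrib] at hw
      have hs : 0 ≤ ∑ j, r' j := Finset.sum_nonneg fun j _ => hr'nn j
      have hm0 : (0 : ℝ) < m := by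
        have : 0 < m := by omega
        exact_mod_cast this
      have : (m : ℝ) * (t + Δ) ≤ m * O := by linarith
      exact (le_of_mul_le_mul_left this hm0).trans hOB
  refine ⟨hMm, hr'nn, ?_, ?_, ?_⟩
  · intro j
    by_cases hc : j ∈ U ∧ r' j ≤ 0
    · rw [if_pos hc]; exact htB
    · rw [if_neg hc]; exact h.C_le j
  · intro j hj _
    have : r' j = r j - Δ := by
      simp only [hr', hspeed, if_pos (hMU hj), if_pos hj, one_mul]
    rw [this]
    linarith [hmand j hj]
  · rintro ⟨j1, hj1r, hj1M⟩
    have hj1U := hr'U j1 hj1r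
    have hne : (U \ M).Nonempty := ⟨j1, Finset.mem_sdiff.2 ⟨hj1U, hj1M⟩⟩
    have hQ := hQpos hne
    have hf := hfree hne
    have hj1' : j1 ∉ mand ∩ U := fun hh => hj1M (Finset.mem_union_left _ hh)
    obtain ⟨lam, rho, hpr⟩ := h.prop (hNex j1 hj1U hj1')
    set rho' : ℝ := ((g : ℝ) - D.card) / Q with hrho'
    have hrho'Q : rho' * Q = g - D.card := by rw [hrho']; field_simp
    -- the designated jobs are processed no faster, relative to `q`, than the level grows
    have hDrho : ∀ j ∈ D, 1 ≤ rho' * q j := by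
      intro j hj
      rcases hDthr with hE | ⟨x, hx, hx1, hx2⟩
      · rw [hE] at hj; simp at hj
      · rw [hrho', div_mul_eq_mul_div, le_div_iff₀ hQ, one_mul]
        exact hx2.trans (mul_le_mul_of_nonneg_left (hx1 j hj) hf.le)
    -- the growth rate of the level does not decrease
    have hrate : rho ≤ rho' := by
      rw [hrho', le_div_iff₀ hQ]
      have hsplit : ∑ j ∈ U \ (mand ∩ U), q j = ∑ j ∈ D, q j + Q := by
        have hDN : D ⊆ U \ (mand ∩ U) := fun j hj =>
          Finset.mem_sdiff.2 ⟨hDU hj, Finset.disjoint_right.1 hdisj hj⟩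
        rw [← Finset.sum_sdiff hDN, Finset.sdiff_sdiff_left', ← Finset.sdiff_union_distrib,
          add_comm]
      have hR := hpr.rate
      rw [← hUdef, hsplit, ← hgR] at hR
      by_cases hall : ∀ j ∈ D, 1 ≤ rho * q j
      · have : (D.card : ℝ) ≤ rho * ∑ j ∈ D, q j := by
          rw [Finset.mul_sum]
          calc (D.card : ℝ) = ∑ j ∈ D, (1 : ℝ) := by simp
            _ ≤ _ := Finset.sum_le_sum hall
        linarith
      · push Not at hall
        obtain ⟨y, hy, hy1⟩ := hall
        rcases hDthr with hE | ⟨x, hx, hx1, hx2⟩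
        · rw [hE] at hy; simp at hy
        · have h1 : rho * q x ≤ 1 :=
            (mul_le_mul_of_nonneg_left (hx1 y hy) hpr.rho_nonneg).trans hy1.le
          calc rho * Q ≤ rho * (((g : ℝ) - D.card) * q x) :=
                mul_le_mul_of_nonneg_left hx2 hpr.rho_nonneg
            _ = ((g : ℝ) - D.card) * (rho * q x) := by ring
            _ ≤ ((g : ℝ) - D.card) * 1 := mul_le_mul_of_nonneg_left h1 hf.le
            _ = _ := mul_one _
    have hMrho : ∀ j ∈ M, p j - r j ≤ lam * q j ∧ 1 ≤ rho' * q j := by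
      intro j hj
      rcases Finset.mem_union.1 hj with hj | hj
      · rw [Finset.mem_inter] at hj
        obtain ⟨h1, h2⟩ := hpr.mandatory j hj.1 ((hmU j).1 hj.2)
        exact ⟨h1, h2.trans (mul_le_mul_of_nonneg_right hrate (hq j).le)⟩
      · obtain ⟨hrj, hjm⟩ := hDsub j hj
        exact ⟨(hpr.nonmand j hrj hjm).le, hDrho j hj⟩
    have hlevM : ∀ j ∈ M, p j - r' j ≤ (lam + rho' * Δ) * q j := by
      intro j hj
      have : r' j = r j - Δ := by
        simp only [hr', hspeed, if_pos (hMU hj), if_pos hj, one_mul]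
      obtain ⟨h1, h2⟩ := hMrho j hj
      rw [this]
      nlinarith [mul_le_mul_of_nonneg_right h2 hΔnn]
    have hlevN : ∀ j ∈ U, j ∉ M → p j - r' j = (lam + rho' * Δ) * q j := by
      intro j hj hjM
      have h1 : r' j = r j - ((g : ℝ) - D.card) * q j / Q * Δ := by
        simp only [hr', hspeed, if_pos hj, if_neg hjM]
      have h2 : p j - r j = lam * q j := hpr.nonmand j ((hmU j).1 hj) fun hh =>
        hjM (Finset.mem_union_left _ (Finset.mem_inter.2 ⟨hh, hj⟩))
      rw [h1, add_mul, ← h2, hrho']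
      ring
    set U' : Finset (Fin n) := Finset.univ.filter fun j => 0 < r' j with hU'
    have hc' : (M ∩ U').card ≤ M.card := Finset.card_le_card Finset.inter_subset_left
    have hMlt : (M.card : ℝ) < m := by rw [hMR]; linarith
    refine ⟨lam + rho' * Δ, rho', ?_, ?_, hwork hne, ?_, ?_, ?_, ?_⟩
    · exact hpr.rho_nonneg.trans hrate
    · have : M.card < m := by exact_mod_cast hMlt
      exact lt_of_le_of_lt hc' this
    · right
      -- the job completing in this step has been processed for at most the level
      have h1 : p i0 ≤ (lam + rho' * Δ) * q i0 := by
        by_cases hi : i0 ∈ M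
        · have := hlevM i0 hi
          rwa [hi0', sub_zero] at this
        · have := hlevN i0 hi0U hi
          rw [hi0', sub_zero] at this
          exact this.le
      have h2 := (herr i0).2
      have h3 : 1 * q i0 ≤ α * (lam + rho' * Δ) * q i0 := by
        nlinarith [mul_le_mul_of_nonneg_left h1 (by linarith : (0:ℝ) ≤ α)]
      exact le_of_mul_le_mul_right h3 (hq i0)
    · intro j hj hjM
      exact hlevN j (hr'U j hj) hjM
    · intro j hj _
      exact ⟨hlevM j hj, (hMrho j hj).2⟩
    · have hsub : U' \ (M ∩ U') ⊆ U \ M := by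
        intro j hj
        rw [Finset.mem_sdiff] at hj ⊢
        have hj1 : 0 < r' j := by simpa [hU'] using hj.1
        exact ⟨hr'U j hj1, fun hh => hj.2 (Finset.mem_inter.2 ⟨hh, hj.1⟩)⟩
      have h1 : ∑ j ∈ U' \ (M ∩ U'), q j ≤ Q :=
        Finset.sum_le_sum_of_subset_of_nonneg hsub fun j _ _ => (hq j).le
      have h2 : ((M ∩ U').card : ℝ) ≤ M.card := by exact_mod_cast hc'
      calc rho' * ∑ j ∈ U' \ (M ∩ U'), q j ≤ rho' * Q :=
            mul_le_mul_of_nonneg_left h1 (hpr.rho_nonneg.trans hrate)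
        _ ≤ _ := by rw [hrho'Q]; linarith


/-- For every `m ≥ 2` and every `α ≥ 1`, on every instance on `m` identical machines
with prediction error at most `α`, the makespan of the schedule produced by the PPRR
algorithm is at most `2 − 1/m − (m−1)/(mα²)` times the optimal preemptive makespan. -/
theorem pprr_upper_bound (m : ℕ) (hm : 2 ≤ m) (α : ℝ) (hα : 1 ≤ α) (n : ℕ)
    (p q : Fin n → ℝ) (hp : ∀ j, 0 < p j) (hq : ∀ j, 0 < q j) (herr : PredErrLe α p q) :
    pprrMakespan m n q p ≤ (2 - 1 / (m : ℝ) - ((m : ℝ) - 1) / ((m : ℝ) * α ^ 2)) * OPTpre m n p := by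
  classical
  set O := OPTpre m n p with hO
  have hm' : (2 : ℝ) ≤ m := by exact_mod_cast hm
  have hPO : ∑ j, p j ≤ m * O := by
    have : (∑ j, p j) / m ≤ O := le_max_right _ _
    rw [div_le_iff₀ (by linarith)] at this
    linarith
  have hpO : ∀ j, p j ≤ O := fun j =>
    (le_csSup (Set.finite_range p).bddAbove ⟨j, rfl⟩).trans (le_max_left _ _)
  have hO0 : 0 ≤ O :=
    le_max_of_le_right (div_nonneg (Finset.sum_nonneg fun j _ => (hp j).le) (by linarith))
  set B := (2 - 1 / (m : ℝ) - ((m : ℝ) - 1) / ((m : ℝ) * α ^ 2)) * O with hB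
  have hOB : O ≤ B := by
    have h1 : (2 - 1 / (m : ℝ) - ((m : ℝ) - 1) / ((m : ℝ) * α ^ 2))
        = 1 + (1 - 1 / (m : ℝ)) * (1 - 1 / α ^ 2) := by
      field_simp; ring
    have h2 : 1 / (m : ℝ) ≤ 1 := by rw [div_le_one (by linarith)]; linarith
    have h3 : 1 / α ^ 2 ≤ 1 := by rw [div_le_one (by positivity)]; nlinarith
    rw [hB, h1]
    nlinarith [mul_nonneg (mul_nonneg (sub_nonneg.2 h2) (sub_nonneg.2 h3)) hO0]
  have key : ∀ k, PInv m n α B p q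
      ((pprrStep m n q)^[k] (0, p, ∅, fun _ => 0)).1
      ((pprrStep m n q)^[k] (0, p, ∅, fun _ => 0)).2.1
      ((pprrStep m n q)^[k] (0, p, ∅, fun _ => 0)).2.2.1
      ((pprrStep m n q)^[k] (0, p, ∅, fun _ => 0)).2.2.2 := by
    intro k
    induction k with
    | zero =>
      refine ⟨by simp, fun j => (hp j).le, fun _ => hO0.trans hOB, by simp, fun _ =>
        ⟨0, 0, le_rfl, ?_, by simp, Or.inl ⟨rfl, rfl⟩, by simp, by simp, by simp⟩⟩
      simp; omega
    | succ k ih =>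
      rw [Function.iterate_succ_apply']
      generalize (pprrStep m n q)^[k] (0, p, ∅, fun _ => 0) = st at ih ⊢
      obtain ⟨t, r, mand, C⟩ := st
      by_cases hU : (Finset.univ.filter fun j => 0 < r j).Nonempty
      · obtain ⟨D, hD, hs⟩ := pprrStep_spec m n q t r mand C hU
        rw [hs]
        exact PInv.step hm hα hq herr hPO hpO hB hOB ih hD hU
      · rw [pprrStep_of_not_nonempty m n q (t, r, mand, C) hU]
        exact ih
  unfold pprrMakespan pprrFinal
  refine Real.sSup_le ?_ (hO0.trans hOB)
  rintro _ ⟨j, rfl⟩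
  exact (key n).C_le j
end

section
/- Let m ≥ 2 and let α ≥ 1 be such that (m−1)α² is an integer. Then every non-clairvoyant algorithm for preemptive scheduling with prediction on m identical machines has competitive ratio at least 2 − 1/m − (m−1)/(m α²) at error level α; consequently the PPRR algorithm, whose competitive ratio is at most 2 − 1/m − (m−1)/(m α²), is optimal for such α. -/
/-! ### Lower bound -/

section LowerBound

variable {m : ℕ} (A : PreAlg m) {n : ℕ} {q p : Fin n → ℝ}

lemma preAlg_continuous (hq : ∀ j, 0 < q j) (hp : ∀ j, 0 < p j) (j : Fin n) :
    Continuous (A.w n q p j) := by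
  have : LipschitzWith 1 (A.w n q p j) := by
    apply LipschitzWith.of_le_add
    intro x y
    rcases le_total x y with h | h
    · have := A.w_mono n q p hq hp j h
      have := dist_nonneg (x := x) (y := y)
      linarith
    · have := A.w_speed_le_one n q p hq hp j y x h
      rw [Real.dist_eq, abs_of_nonneg (by linarith)]
      linarith
  exact this.continuous

/-- The infimum defining the completion time is attained. -/
lemma preCompletion_spec (hq : ∀ j, 0 < q j) (hp : ∀ j, 0 < p j) (j : Fin n) :
    A.w n q p j (preCompletion A n q p j) = p j ∧
      ∀ s, s < preCompletion A n q p j → A.w n q p j s < p j := by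
  have hbdd : BddBelow {t : ℝ | A.w n q p j t = p j} := by
    refine ⟨0, fun t ht => ?_⟩
    by_contra! hlt
    have h1 := A.w_mono n q p hq hp j hlt.le
    rw [A.w_zero n q p hq hp j] at h1
    have : A.w n q p j t = p j := ht
    linarith [hp j]
  have hcl : IsClosed {t : ℝ | A.w n q p j t = p j} :=
    isClosed_eq (preAlg_continuous A hq hp j) continuous_const
  refine ⟨hcl.csInf_mem (A.completes n q p hq hp j) hbdd, fun s hs => ?_⟩
  refine lt_of_le_of_ne (A.w_le n q p hq hp j s) fun h => ?_
  exact absurd (csInf_le hbdd h) (not_le.mpr hs)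

lemma preCompletion_le_preMakespan (j : Fin n) :
    preCompletion A n q p j ≤ preMakespan A n q p :=
  le_csSup (Set.finite_range _).bddAbove ⟨j, rfl⟩

/-- The adversary: all predictions are `1`, all jobs have length `1/α` except the job `i` which
`A` would finish last if all lengths were `1/α`; that one has length `α`.  Integrality of `(m - 1) * α ^ 2` makes the average load equal to `α`, too, so
the optimum is exactly `α`. -/
lemma exists_bad_instance (hm : 2 ≤ m) {α : ℝ} (hα : 1 ≤ α) {k : ℕ}
    (hk : ((m : ℝ) - 1) * α ^ 2 = k) :
    ∃ p q : Fin (k + 1) → ℝ, (∀ j, 0 < p j) ∧ (∀ j, 0 < q j) ∧ PredErrLe α p q ∧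
      0 < OPTpre m (k + 1) p ∧
      (2 - 1 / (m : ℝ) - ((m : ℝ) - 1) / ((m : ℝ) * α ^ 2)) * OPTpre m (k + 1) p
        ≤ preMakespan A (k + 1) q p := by
  have hα0 : 0 < α := by linarith
  have hm0 : (0 : ℝ) < m := by positivity
  have hinv : α⁻¹ ≤ 1 := inv_le_one_of_one_le₀ hα
  have hinv0 : 0 < α⁻¹ := by positivity
  set q : Fin (k + 1) → ℝ := fun _ => 1
  set p₀ : Fin (k + 1) → ℝ := fun _ => α⁻¹
  have hq : ∀ j, 0 < q j := fun _ => one_pos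
  have hp₀ : ∀ j, 0 < p₀ j := fun _ => hinv0
  obtain ⟨i, hi⟩ := Finite.exists_max (preCompletion A (k + 1) q p₀)
  set T := preCompletion A (k + 1) q p₀ i with hT
  set p : Fin (k + 1) → ℝ := fun j => if j = i then α else α⁻¹ with hpdef
  have hpi : p i = α := by simp [hpdef]
  have hp : ∀ j, 0 < p j := by
    intro j; simp only [hpdef]; split_ifs <;> assumption
  have hpα : ∀ j, p j ≤ α := by
    intro j; simp only [hpdef]; split_ifs <;> linarith
  have hsum : ∑ j, p j = m * α := by
    have : ∑ j, p j = ∑ j, ((if j = i then α - α⁻¹ else 0) + α⁻¹) := by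
      refine Finset.sum_congr rfl fun j _ => ?_
      simp only [hpdef]; split_ifs <;> ring
    rw [this, Finset.sum_add_distrib]
    simp only [Finset.sum_ite_eq', Finset.mem_univ, if_true, Finset.sum_const, Finset.card_univ,
      Fintype.card_fin, nsmul_eq_mul, Nat.cast_add, Nat.cast_one]
    rw [← hk]; field_simp; ring
  have hopt : OPTpre m (k + 1) p = α := by
    have h1 : sSup (Set.range p) = α :=
      IsGreatest.csSup_eq ⟨⟨i, hpi⟩, by rintro _ ⟨j, rfl⟩; exact hpα j⟩
    rw [OPTpre, h1, hsum, mul_div_cancel_left₀ _ hm0.ne', max_self]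
  -- Every job of the all-short instance is finished by time `T`, so `T` is at least the
  -- average load.
  have hall : ∀ j, A.w (k + 1) q p₀ j T = α⁻¹ := fun j =>
    le_antisymm (A.w_le _ q p₀ hq hp₀ j T)
      ((preCompletion_spec A hq hp₀ j).1.symm.trans_le (A.w_mono _ q p₀ hq hp₀ j (hi j)))
  have hTpos : 0 ≤ T := by
    by_contra! hlt
    have h1 := A.w_mono _ q p₀ hq hp₀ i hlt.le
    rw [A.w_zero _ q p₀ hq hp₀ i, hall] at h1
    linarith
  have hTload : ((k : ℝ) + 1) * α⁻¹ ≤ m * T := by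
    have := A.w_total_speed _ q p₀ hq hp₀ 0 T hTpos
    simpa [hall, A.w_zero _ q p₀ hq hp₀] using this
  have hlt : ∀ s, s < T → A.w (k + 1) q p₀ i s < α⁻¹ := (preCompletion_spec A hq hp₀ i).2
  have hsame : ∀ j t, t ≤ T → A.w (k + 1) q p₀ j t = A.w (k + 1) q p j t := by
    refine A.nonclairvoyant _ q p₀ p hq hp₀ hp T fun j => ?_
    by_cases hj : j = i
    · right; subst hj; intro s hs
      have := hlt s hs
      exact ⟨this, by rw [hpi]; linarith⟩
    · left; simp [hpdef, hj, p₀]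
  -- After time `T` the long job still needs `α - 1/α` units at speed at most `1`.
  have hfin : T + (α - α⁻¹) ≤ preCompletion A (k + 1) q p i := by
    obtain ⟨hc, -⟩ := preCompletion_spec A hq hp i
    set c := preCompletion A (k + 1) q p i
    rw [hpi] at hc
    have hTc : T ≤ c := by
      by_contra! h
      have h1 := hlt c h
      rw [hsame i c h.le, hc] at h1
      linarith
    have h2 := A.w_speed_le_one _ q p hq hp i T c hTc
    rw [hc, ← hsame i T le_rfl, hall] at h2
    linarith
  refine ⟨p, q, hp, hq, fun j => ⟨by simpa [q] using hpα j, ?_⟩, hopt ▸ hα0, ?_⟩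
  · simp only [hpdef, q]; split_ifs
    · nlinarith
    · rw [mul_inv_cancel₀ hα0.ne']
  · refine le_trans ?_ (hfin.trans (preCompletion_le_preMakespan A i))
    rw [hopt]
    have h3 : ((k : ℝ) + 1) * α⁻¹ / m ≤ T := by
      rw [div_le_iff₀ hm0]; linarith
    have h4 : (2 - 1 / (m : ℝ) - ((m : ℝ) - 1) / ((m : ℝ) * α ^ 2)) * α
        = ((k : ℝ) + 1) * α⁻¹ / m + (α - α⁻¹) := by
      rw [← hk]; field_simp; ring
    linarith

end LowerBound

/-! ### Upper bound for PPRR -/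

section UpperBound

variable {n : ℕ}

/-- The jobs with positive remaining requirement. -/
noncomputable def unfinished (r : Fin n → ℝ) : Finset (Fin n) := Finset.univ.filter fun j => 0 < r j

/-- Invariant of the PPRR simulation between two events.  `M` is the set of unfinished mandatory
jobs, `N` the set of unfinished non-mandatory ones, and `B` the claimed bound on the makespan.
Each mandatory job keeps a machine until it is done, so it finishes at time `t + r j`.  The clause
`busy` speaks about the phase in which a non-mandatory job is left: no machine has been idle, some
machine is available to `N`, a mandatory job makes normalized progress (work divided by
prediction) at rate `1 / q i` at most the rate `(m - |M|) / ∑ j ∈ N, q j` available to `N`, and the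
normalized progress of all jobs is at most a number `l`, which all jobs of `N` have reached.
Either nothing has happened yet, or some job is finished and hence `1 / α ≤ l`. -/
structure PPRRInv (m : ℕ) (q p : Fin n → ℝ) (α B : ℝ)
    (t : ℝ) (r : Fin n → ℝ) (M N : Finset (Fin n)) (C : Fin n → ℝ) : Prop where
  r_nonneg : ∀ j, 0 ≤ r j
  r_le : ∀ j, r j ≤ p j
  C_le : ∀ j, C j ≤ t
  t_le : t ≤ B
  mand_le : ∀ j ∈ M, t + r j ≤ B
  busy : N.Nonempty → (m : ℝ) * t = ∑ j, (p j - r j) ∧ M.card < m ∧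
    (∀ i ∈ M, ∑ j ∈ N, q j ≤ ((m : ℝ) - M.card) * q i) ∧
    ∃ l : ℝ, (∀ j, p j - r j ≤ l * q j) ∧ (∀ j ∈ N, p j - r j = l * q j) ∧
      (1 / α ≤ l ∨ (t = 0 ∧ r = p))

lemma pprrStep_eq_self {m : ℕ} {q : Fin n → ℝ}
    {st : ℝ × (Fin n → ℝ) × Finset (Fin n) × (Fin n → ℝ)}
    (hU : ¬ (unfinished st.2.1).Nonempty) : pprrStep m n q st = st := by
  unfold pprrStep
  exact dif_neg hU

/-- If the list `L` lists the jobs by non-increasing prediction and the selection criterion holds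
at its `d`-th entry, then the corresponding inequality holds for every selected job.  The case
`d = 0`, in which nothing is selected, is allowed. -/
lemma prefix_spec {q : Fin n → ℝ} {L : List (Fin n)} (hnd : L.Nodup)
    (hs : L.Pairwise fun a b => q b ≤ q a) {g d : ℕ}
    (hd : d ≠ 0 → ∃ hk : d - 1 < L.length,
      ((g : ℝ) - d) * q (L.get ⟨d - 1, hk⟩) ≥ ((L.drop d).map q).sum) (hdg : d ≤ g) :
    (L.take d).toFinset.card = d ∧ L.toFinset \ (L.take d).toFinset = (L.drop d).toFinset ∧
      ((L.drop d).map q).sum = ∑ j ∈ (L.drop d).toFinset, q j ∧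
      ∀ i ∈ (L.take d).toFinset, ∑ j ∈ (L.drop d).toFinset, q j ≤ ((g : ℝ) - d) * q i := by
  have hdl : d ≤ L.length := by
    by_cases h : d = 0
    · omega
    · obtain ⟨hk, -⟩ := hd h; omega
  have hsum : ((L.drop d).map q).sum = ∑ j ∈ (L.drop d).toFinset, q j :=
    (List.sum_toFinset q (hnd.sublist (List.drop_sublist d L))).symm
  refine ⟨?_, ?_, hsum, ?_⟩
  · rw [List.toFinset_card_of_nodup (hnd.sublist (List.take_sublist d L)), List.length_take]
    omega
  · have hdisj := List.disjoint_take_drop hnd (le_refl d)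
    ext x
    have hx : x ∈ L ↔ x ∈ L.take d ∨ x ∈ L.drop d := by
      rw [← List.mem_append, List.take_append_drop]
    have := @hdisj x
    simp only [Finset.mem_sdiff, List.mem_toFinset, hx]
    tauto
  · intro i hi
    rw [List.mem_toFinset, List.mem_take_iff_getElem] at hi
    obtain ⟨a, ha, rfl⟩ := hi
    obtain ⟨hk, hc⟩ := hd (by omega)
    rw [← hsum]
    refine hc.le.trans (mul_le_mul_of_nonneg_left ?_ (by
      have : (d : ℝ) ≤ g := by exact_mod_cast hdg
      linarith))
    rcases Nat.lt_or_ge a (d - 1) with h | h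
    · exact List.pairwise_iff_getElem.mp hs a (d - 1) (by omega) hk h
    · have : a = d - 1 := by omega
      subst this; rfl

open scoped Classical in
/-- The properties of one PPRR step on which the makespan bound rests; `D` is the set of newly
mandatory jobs and `s` the vector of speeds.  Of the choice of `d` only the selection criterion
matters, not its maximality (which merely guarantees speeds of at most `1`). -/
lemma pprrStep_spec_s16 {m : ℕ} {q : Fin n → ℝ} {t : ℝ} {r : Fin n → ℝ} {mand : Finset (Fin n)}
    {C : Fin n → ℝ} (hU : (unfinished r).Nonempty) :
    ∃ (M N D : Finset (Fin n)) (g : ℕ) (s : Fin n → ℝ) (Δ : ℝ) (r' C' : Fin n → ℝ),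
      M = mand ∩ unfinished r ∧ N = unfinished r \ M ∧ D ⊆ N ∧ g = m - M.card ∧
      (∀ i ∈ D, ∑ j ∈ N \ D, q j ≤ ((g : ℝ) - D.card) * q i) ∧
      (∀ j ∈ M ∪ D, s j = 1) ∧
      (∀ j ∈ N \ D, s j = ((g : ℝ) - D.card) * q j / ∑ j ∈ N \ D, q j) ∧
      (∃ j ∈ unfinished r, Δ = r j / s j) ∧ (∀ j ∈ unfinished r, Δ ≤ r j / s j) ∧
      (∀ j ∈ unfinished r, r' j = r j - s j * Δ) ∧ (∀ j ∉ unfinished r, r' j = r j) ∧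
      (∀ j, C' j = t + Δ ∨ C' j = C j) ∧
      pprrStep m n q (t, r, mand, C) = (t + Δ, r', M ∪ D, C') := by
  let U : Finset (Fin n) := Finset.univ.filter fun j => 0 < r j
  let M := mand ∩ U
  let N := U \ M
  let g : ℕ := m - M.card
  let L : List (Fin n) :=
    (N.sort (· ≤ ·)).mergeSort fun a b => decide (q b < q a ∨ (q a = q b ∧ a ≤ b))
  let cond : ℕ → Prop := fun k =>
    ∃ hk : k - 1 < L.length, ((g : ℝ) - k) * q (L.get ⟨k - 1, hk⟩) ≥ ((L.drop k).map q).sum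
  let d : ℕ := ((Finset.Icc 1 (min g L.length)).filter cond).sup id
  let newMand := M ∪ (L.take d).toFinset
  let Q : ℝ := ((L.drop d).map q).sum
  let speed : Fin n → ℝ := fun j =>
    if j ∈ newMand then 1 else if j ∈ U then ((g : ℝ) - d) * q j / Q else 0
  let Δ : ℝ := U.inf' hU fun j => r j / speed j
  let r' : Fin n → ℝ := fun j => if j ∈ U then r j - speed j * Δ else r j
  let C' : Fin n → ℝ := fun j => if j ∈ U ∧ r' j ≤ 0 then t + Δ else C j
  have hstep : pprrStep m n q (t, r, mand, C) = (t + Δ, r', newMand, C') := by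
    unfold pprrStep
    exact dif_pos hU
  have hperm : L.Perm (N.sort (· ≤ ·)) := List.mergeSort_perm _ _
  have hLN : L.toFinset = N := by
    rw [List.toFinset_eq_of_perm _ _ hperm, Finset.sort_toFinset]
  have hnd : L.Nodup := hperm.nodup_iff.mpr (Finset.sort_nodup _ _)
  have hsorted : L.Pairwise fun a b => q b ≤ q a := by
    have := List.pairwise_mergeSort
      (le := fun a b : Fin n => decide (q b < q a ∨ (q a = q b ∧ a ≤ b)))
      (fun a b c h1 h2 => by
        simp only [decide_eq_true_eq] at h1 h2 ⊢
        rcases h1 with h1 | ⟨h1, h1'⟩ <;> rcases h2 with h2 | ⟨h2, h2'⟩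
        · left; linarith
        · left; linarith
        · left; linarith
        · right; exact ⟨h1.trans h2, h1'.trans h2'⟩)
      (fun a b => by
        simp only [Bool.or_eq_true, decide_eq_true_eq]
        rcases lt_trichotomy (q a) (q b) with h | h | h
        · right; left; exact h
        · rcases le_total a b with h' | h'
          · left; right; exact ⟨h, h'⟩
          · right; right; exact ⟨h.symm, h'⟩
        · left; left; exact h)
      (N.sort (· ≤ ·))
    refine this.imp fun {a b} h => ?_
    simp only [decide_eq_true_eq] at h
    rcases h with h | h
    · exact h.le
    · exact h.1.ge
  have hdmem : d ≠ 0 → d ∈ (Finset.Icc 1 (min g L.length)).filter cond := by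
    intro h0
    have hne : ((Finset.Icc 1 (min g L.length)).filter cond).Nonempty := by
      rw [Finset.nonempty_iff_ne_empty]
      intro he
      exact h0 (by simp only [d, he, Finset.sup_empty, bot_eq_zero])
    obtain ⟨k, hk, hkd⟩ := Finset.exists_mem_eq_sup _ hne id
    have hkd' : d = k := hkd
    rw [hkd']; exact hk
  have hdg : d ≤ g := by
    by_cases h0 : d = 0
    · omega
    · have := (Finset.mem_filter.mp (hdmem h0)).1
      rw [Finset.mem_Icc] at this
      omega
  obtain ⟨hcard, hdrop, hsum, hcond⟩ :=
    prefix_spec (g := g) hnd hsorted (fun h0 => (Finset.mem_filter.mp (hdmem h0)).2) hdg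
  rw [hLN] at hdrop
  rw [← hdrop] at hsum hcond
  have hNU : N ⊆ U := Finset.sdiff_subset
  refine ⟨M, N, (L.take d).toFinset, g, speed, Δ, r', C', rfl, rfl, ?_, rfl, ?_, ?_, ?_, ?_, ?_,
    ?_, ?_, ?_, hstep⟩
  · intro x hx
    rw [← hLN, List.mem_toFinset]
    exact List.mem_of_mem_take (List.mem_toFinset.mp hx)
  · rw [hcard]; exact hcond
  · intro j hj; exact if_pos hj
  · intro j hj
    rw [hcard, ← hsum]
    have hjN := Finset.mem_sdiff.mp hj
    have hnot : j ∉ newMand := by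
      intro h
      rcases Finset.mem_union.mp h with h | h
      · exact (Finset.mem_sdiff.mp hjN.1).2 h
      · exact hjN.2 h
    have h1 : speed j = if j ∈ U then ((g : ℝ) - d) * q j / Q else 0 := if_neg hnot
    rw [h1, if_pos (hNU hjN.1)]
  · exact Finset.exists_mem_eq_inf' hU _
  · intro j hj; exact Finset.inf'_le _ hj
  · intro j hj; exact if_pos hj
  · intro j hj; exact if_neg hj
  · intro j
    by_cases h : j ∈ U ∧ r' j ≤ 0
    · left; exact if_pos h
    · right; exact if_neg h

/-- The invariant survives one step.  The hypotheses `hB1`, `hB2`, `hB3` say that `B` bounds the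
longest job, the average load, and the finishing time of a job that becomes mandatory when the
normalized progress is at least `1 / α`. -/
lemma inv_step {m : ℕ} {q p : Fin n → ℝ} {α B : ℝ} (hm : 2 ≤ m) (hα : 1 ≤ α)
    (hq : ∀ j, 0 < q j) (herr : PredErrLe α p q)
    (hB1 : ∀ j, p j ≤ B) (hB2 : ∑ j, p j ≤ m * B)
    (hB3 : ∀ j, (∑ j, p j) / m + (1 - 1 / (m : ℝ)) * ((1 - 1 / α ^ 2) * p j) ≤ B)
    {t : ℝ} {r : Fin n → ℝ} {M N D U : Finset (Fin n)} {C : Fin n → ℝ} {g : ℕ}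
    {s : Fin n → ℝ} {Δ : ℝ} {r' C' : Fin n → ℝ}
    (hinv : PPRRInv m q p α B t r M N C)
    (hUr : U = unfinished r) (hMU : M ⊆ U) (hN : N = U \ M) (hD : D ⊆ N) (hg : g = m - M.card)
    (hcond : ∀ i ∈ D, ∑ j ∈ N \ D, q j ≤ ((g : ℝ) - D.card) * q i)
    (hs1 : ∀ j ∈ M ∪ D, s j = 1)
    (hs2 : ∀ j ∈ N \ D, s j = ((g : ℝ) - D.card) * q j / ∑ j ∈ N \ D, q j)
    (hΔ1 : ∃ j ∈ U, Δ = r j / s j) (hΔ2 : ∀ j ∈ U, Δ ≤ r j / s j)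
    (hr1 : ∀ j ∈ U, r' j = r j - s j * Δ) (hr2 : ∀ j ∉ U, r' j = r j)
    (hC : ∀ j, C' j = t + Δ ∨ C' j = C j) :
    PPRRInv m q p α B (t + Δ) r' ((M ∪ D) ∩ unfinished r')
      (unfinished r' \ ((M ∪ D) ∩ unfinished r')) C' := by
  have hm0 : (0 : ℝ) < m := by positivity
  have hα0 : 0 < α := by linarith
  have hUpos : ∀ j, j ∈ U → 0 < r j := by
    intro j hj; rw [hUr] at hj; simpa [unfinished] using hj
  have hUzero : ∀ j, j ∉ U → r j = 0 := by
    intro j hj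
    rw [hUr] at hj
    have : ¬ 0 < r j := by simpa [unfinished] using hj
    linarith [hinv.r_nonneg j]
  have hNU : N ⊆ U := hN ▸ Finset.sdiff_subset
  have hdisj : Disjoint M N := hN ▸ Finset.disjoint_sdiff
  have hMN : U = M ∪ N := by rw [hN, Finset.union_sdiff_of_subset hMU]
  have hcases : ∀ j ∈ U, j ∈ M ∪ D ∨ j ∈ N \ D := by
    intro j hj
    rw [hMN] at hj
    simp only [Finset.mem_union, Finset.mem_sdiff] at hj ⊢
    tauto
  -- The facts available while some job is processed at a fractional rate.
  have hrate : (N \ D).Nonempty → 0 < ∑ j ∈ N \ D, q j ∧ (g : ℝ) = m - M.card ∧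
      0 < (g : ℝ) - D.card ∧ ∀ i ∈ M ∪ D, ∑ j ∈ N \ D, q j ≤ ((g : ℝ) - D.card) * q i := by
    intro hne
    obtain ⟨-, hcard, hMq, -⟩ := hinv.busy (hne.mono Finset.sdiff_subset)
    have hQ : 0 < ∑ j ∈ N \ D, q j := Finset.sum_pos (fun j _ => hq j) hne
    have hgR : (g : ℝ) = m - M.card := by rw [hg, Nat.cast_sub hcard.le]
    have hgpos : (0 : ℝ) < g := by
      have : (M.card : ℝ) < m := by exact_mod_cast hcard
      linarith
    have hgd : 0 < (g : ℝ) - D.card := by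
      rcases D.eq_empty_or_nonempty with h | ⟨i, hi⟩
      · simpa [h] using hgpos
      · have := hcond i hi
        by_contra! hle
        nlinarith [hq i]
    refine ⟨hQ, hgR, hgd, fun i hi => ?_⟩
    rcases Finset.mem_union.mp hi with hi | hi
    · have h1 := hMq i hi
      rw [← hgR] at h1
      -- Removing `D` does not slow the others down: `g / ∑ N ≤ (g - |D|) / ∑ (N \ D)`.
      have h2 : (D.card : ℝ) * ∑ j ∈ N \ D, q j ≤ ((g : ℝ) - D.card) * ∑ i ∈ D, q i := by
        rw [← nsmul_eq_mul, ← Finset.sum_const, Finset.mul_sum]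
        exact Finset.sum_le_sum hcond
      have h3 := Finset.sum_sdiff (f := q) hD
      set Q := ∑ j ∈ N \ D, q j
      set S := ∑ j ∈ D, q j
      rw [← h3] at h1
      have h4 := mul_le_mul_of_nonneg_left h1 hgd.le
      have h5 : (g : ℝ) * Q ≤ g * (((g : ℝ) - D.card) * q i) := by nlinarith
      exact le_of_mul_le_mul_left h5 hgpos
    · exact hcond i hi
  have hspos : ∀ j ∈ U, 0 < s j := by
    intro j hj
    rcases hcases j hj with h | h
    · rw [hs1 j h]; exact one_pos
    · obtain ⟨hQ, -, hgd, -⟩ := hrate ⟨j, h⟩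
      rw [hs2 j h]
      have := hq j
      positivity
  obtain ⟨a, haU, ha⟩ := hΔ1
  have hΔ0 : 0 ≤ Δ := ha ▸ (div_pos (hUpos a haU) (hspos a haU)).le
  have hsΔ : ∀ j ∈ U, s j * Δ ≤ r j := by
    intro j hj
    have := hΔ2 j hj
    rw [le_div_iff₀ (hspos j hj)] at this
    linarith
  have hr'0 : ∀ j, 0 ≤ r' j := by
    intro j
    by_cases hj : j ∈ U
    · rw [hr1 j hj]; linarith [hsΔ j hj]
    · rw [hr2 j hj]; exact hinv.r_nonneg j
  have hr'le : ∀ j, r' j ≤ r j := by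
    intro j
    by_cases hj : j ∈ U
    · rw [hr1 j hj]; nlinarith [hspos j hj]
    · rw [hr2 j hj]
  have hra : r' a = 0 := by
    rw [hr1 a haU, ha, mul_div_cancel₀ _ (hspos a haU).ne', sub_self]
  have hU' : ∀ j, j ∈ unfinished r' → j ∈ U := by
    intro j hj
    by_contra h
    have h1 := hUzero j h
    have h2 : 0 < r' j := by simpa [unfinished] using hj
    rw [hr2 j h] at h2
    linarith
  -- All machines were busy until time `t`, whence `t ≤ (∑ p - r j) / m`; the job has
  -- received `l * q j ≥ q j / α ≥ p j / α ^ 2` units.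
  have hnew : ∀ j ∈ M ∪ D, t + r j ≤ B := by
    intro j hj
    rcases Finset.mem_union.mp hj with hj | hj
    · exact hinv.mand_le j hj
    · obtain ⟨hmt, -, -, l, -, hl, hl'⟩ := hinv.busy ⟨j, hD hj⟩
      rcases hl' with hl' | ⟨h0, hrp⟩
      · have h1 : r j ≤ ∑ i, r i :=
          Finset.single_le_sum (fun i _ => hinv.r_nonneg i) (Finset.mem_univ j)
        rw [Finset.sum_sub_distrib] at hmt
        have h2 : t ≤ ((∑ i, p i) - r j) / m := by
          rw [le_div_iff₀ hm0]; linarith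
        have h3 : p j / α ^ 2 ≤ l * q j := by
          have h5 : p j / α ^ 2 ≤ 1 / α * q j := by
            rw [div_le_iff₀ (by positivity)]
            have := (herr j).1
            calc p j ≤ α * q j := this
              _ = _ := by field_simp
          exact h5.trans (mul_le_mul_of_nonneg_right hl' (hq j).le)
        have h4 := hl j (hD hj)
        have h6 : r j ≤ (1 - 1 / α ^ 2) * p j := by
          have : (1 - 1 / α ^ 2) * p j = p j - p j / α ^ 2 := by ring
          linarith
        have h7 : 0 ≤ 1 - 1 / (m : ℝ) := by
          have : (2 : ℝ) ≤ m := by exact_mod_cast hm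
          rw [sub_nonneg, div_le_one hm0]; linarith
        have h8 := mul_le_mul_of_nonneg_left h6 h7
        have h9 : ((∑ i, p i) - r j) / m + r j = (∑ i, p i) / m + (1 - 1 / (m : ℝ)) * r j := by
          field_simp; ring
        linarith [hB3 j]
      · rw [h0, hrp]; linarith [hB1 j]
  -- With fractional jobs present, the speeds add up to `m`.
  have hwork : (N \ D).Nonempty → (m : ℝ) * (t + Δ) = ∑ j, (p j - r' j) := by
    intro hne
    obtain ⟨hQ, hgR, hgd, -⟩ := hrate hne
    obtain ⟨hmt, -⟩ := hinv.busy (hne.mono Finset.sdiff_subset)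
    have hdj : Disjoint (M ∪ D) (N \ D) := by
      rw [Finset.disjoint_union_left]
      exact ⟨hdisj.mono_right Finset.sdiff_subset, Finset.disjoint_sdiff⟩
    have hUeq : U = (M ∪ D) ∪ (N \ D) := by
      rw [hMN, Finset.union_assoc, Finset.union_sdiff_of_subset hD]
    have hsum : ∑ j ∈ U, s j = m := by
      rw [hUeq, Finset.sum_union hdj, Finset.sum_congr rfl hs1, Finset.sum_congr rfl hs2,
        ← Finset.sum_div, ← Finset.mul_sum, mul_div_cancel_right₀ _ hQ.ne', Finset.sum_const,
        Finset.card_union_of_disjoint (hdisj.mono_right hD), hgR]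
      simp
    have hdiff : ∑ j, (r j - r' j) = m * Δ := by
      rw [← hsum, Finset.sum_mul, ← Finset.sum_subset (Finset.subset_univ U)]
      · exact Finset.sum_congr rfl fun j hj => by rw [hr1 j hj]; ring
      · intro j _ hj; rw [hr2 j hj, sub_self]
    rw [mul_add, hmt, ← hdiff, ← Finset.sum_add_distrib]
    exact Finset.sum_congr rfl fun j _ => by ring
  have hN' : ∀ j ∈ unfinished r' \ ((M ∪ D) ∩ unfinished r'), j ∈ N \ D := by
    intro j hj
    rw [Finset.mem_sdiff, Finset.mem_inter] at hj
    rcases hcases j (hU' j hj.1) with h | h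
    · exact absurd ⟨h, hj.1⟩ hj.2
    · exact h
  refine ⟨hr'0, fun j => (hr'le j).trans (hinv.r_le j), fun j => ?_, ?_, fun j hj => ?_,
    fun hne => ?_⟩
  · rcases hC j with h | h
    · exact h.le
    · rw [h]; linarith [hinv.C_le j]
  · rcases hcases a haU with h | h
    · rw [ha, hs1 a h, div_one]; exact hnew a h
    · have h1 := hwork ⟨a, h⟩
      rw [Finset.sum_sub_distrib] at h1
      have h2 : 0 ≤ ∑ j, r' j := Finset.sum_nonneg fun j _ => hr'0 j
      exact le_of_mul_le_mul_left (by linarith) hm0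
  · have hj1 := (Finset.mem_inter.mp hj).1
    have := hnew j hj1
    rw [hr1 j (hU' j (Finset.mem_inter.mp hj).2), hs1 j hj1]
    linarith
  · obtain ⟨b, hb⟩ := hne
    have hne : (N \ D).Nonempty := ⟨b, hN' b hb⟩
    obtain ⟨hQ, hgR, hgd, hMq⟩ := hrate hne
    obtain ⟨-, -, -, l, hl1, hl2, -⟩ := hinv.busy (hne.mono Finset.sdiff_subset)
    have hcard : (((M ∪ D) ∩ unfinished r').card : ℝ) ≤ M.card + D.card := by
      have := (Finset.card_le_card
        (Finset.inter_subset_left (s₁ := M ∪ D) (s₂ := unfinished r'))).trans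
        (Finset.card_union_le M D)
      exact_mod_cast this
    -- `v` is the common rate of normalized progress of the jobs in `N \ D`.
    set v := ((g : ℝ) - D.card) / ∑ j ∈ N \ D, q j with hv
    have hv0 : 0 < v := div_pos hgd hQ
    have hall : ∀ j, p j - r' j ≤ (l + v * Δ) * q j := by
      intro j
      have h0 := hl1 j
      by_cases hj : j ∈ U
      · have h1 : s j ≤ v * q j := by
          rcases hcases j hj with h | h
          · rw [hs1 j h, hv, div_mul_eq_mul_div, le_div_iff₀ hQ, one_mul]
            exact hMq j h
          · rw [hs2 j h, hv, div_mul_eq_mul_div]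
        rw [hr1 j hj]
        nlinarith [mul_le_mul_of_nonneg_right h1 hΔ0]
      · rw [hr2 j hj]
        have : 0 ≤ v * Δ * q j := mul_nonneg (mul_nonneg hv0.le hΔ0) (hq j).le
        linarith
    refine ⟨hwork hne, ?_, fun i hi => ?_, l + v * Δ, hall, fun j hj => ?_, Or.inl ?_⟩
    · have : (((M ∪ D) ∩ unfinished r').card : ℝ) < m := by linarith
      exact_mod_cast this
    · have h1 : ∑ j ∈ unfinished r' \ ((M ∪ D) ∩ unfinished r'), q j ≤ ∑ j ∈ N \ D, q j :=
        Finset.sum_le_sum_of_subset_of_nonneg hN' fun j _ _ => (hq j).le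
      refine h1.trans ((hMq i (Finset.mem_inter.mp hi).1).trans ?_)
      exact mul_le_mul_of_nonneg_right (by linarith) (hq i).le
    · have hj' := hN' j hj
      have hjN := (Finset.mem_sdiff.mp hj').1
      have h1 := hl2 j hjN
      rw [hr1 j (hNU hjN), hs2 j hj', ← div_mul_eq_mul_div, ← hv]
      linarith
    · -- The job `a` has just been finished, so its normalized progress is `p a / q a ≥ 1 / α`.
      have h1 := hall a
      rw [hra, sub_zero] at h1
      have h2 := (herr a).2
      rw [div_le_iff₀ hα0]
      have h3 : q a * 1 ≤ q a * ((l + v * Δ) * α) := by nlinarith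
      exact le_of_mul_le_mul_left h3 (hq a)

lemma pprr_le {m : ℕ} {q p : Fin n → ℝ} {α : ℝ} (hm : 2 ≤ m) (hα : 1 ≤ α)
    (hp : ∀ j, 0 < p j) (hq : ∀ j, 0 < q j) (herr : PredErrLe α p q) :
    pprrMakespan m n q p
      ≤ (2 - 1 / (m : ℝ) - ((m : ℝ) - 1) / ((m : ℝ) * α ^ 2)) * OPTpre m n p := by
  have hm0 : (0 : ℝ) < m := by positivity
  have hm2 : (2 : ℝ) ≤ m := by exact_mod_cast hm
  have hα0 : 0 < α := by linarith
  have hO1 : ∀ j, p j ≤ OPTpre m n p := fun j =>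
    (le_csSup (Set.finite_range p).bddAbove ⟨j, rfl⟩).trans (le_max_left _ _)
  have hO2 : (∑ j, p j) / m ≤ OPTpre m n p := le_max_right _ _
  have hO0 : 0 ≤ OPTpre m n p :=
    (div_nonneg (Finset.sum_nonneg fun j _ => (hp j).le) hm0.le).trans hO2
  have hc1 : 0 ≤ 1 - 1 / (m : ℝ) := by
    rw [sub_nonneg, div_le_one hm0]; linarith
  have hc2 : 0 ≤ 1 - 1 / α ^ 2 := by
    rw [sub_nonneg, div_le_one (by positivity)]; nlinarith
  have hρ : 2 - 1 / (m : ℝ) - ((m : ℝ) - 1) / ((m : ℝ) * α ^ 2)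
      = 1 + (1 - 1 / (m : ℝ)) * (1 - 1 / α ^ 2) := by
    field_simp; ring
  rw [hρ]
  set O := OPTpre m n p
  set B := (1 + (1 - 1 / (m : ℝ)) * (1 - 1 / α ^ 2)) * O with hB
  have hBO : O ≤ B := by
    have := mul_nonneg (mul_nonneg hc1 hc2) hO0
    linarith
  have hinv : ∀ k, let st := (pprrStep m n q)^[k] (0, p, ∅, fun _ => 0)
      PPRRInv m q p α B st.1 st.2.1 (st.2.2.1 ∩ unfinished st.2.1)
        (unfinished st.2.1 \ (st.2.2.1 ∩ unfinished st.2.1)) st.2.2.2 := by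
    intro k
    induction k with
    | zero =>
      refine ⟨fun j => (hp j).le, fun j => le_rfl, fun j => le_rfl, hO0.trans hBO, ?_, ?_⟩
      · simp
      · intro _
        refine ⟨by simp, by simp; omega, by simp, 0, by simp, by simp, Or.inr ⟨rfl, rfl⟩⟩
    | succ k ih =>
      rw [Function.iterate_succ_apply']
      generalize (pprrStep m n q)^[k] (0, p, ∅, fun _ => 0) = st at ih ⊢
      by_cases hU : (unfinished st.2.1).Nonempty
      · obtain ⟨t, r, mand, C⟩ := st
        obtain ⟨M, N, D, g, s, Δ, r', C', hM, hN, hD, hg, hcond, hs1, hs2, hΔ1, hΔ2, hr1, hr2, hC,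
          heq⟩ := pprrStep_spec_s16 (m := m) (q := q) (t := t) (mand := mand) (C := C) hU
        rw [heq]
        simp only at ih
        rw [← hM, ← hN] at ih
        refine inv_step hm hα hq herr (fun j => (hO1 j).trans hBO) ?_ (fun j => ?_) ih rfl
          (hM ▸ Finset.inter_subset_right) hN hD hg hcond hs1 hs2 hΔ1 hΔ2 hr1 hr2 hC
        · rw [div_le_iff₀ hm0] at hO2
          nlinarith
        · have := mul_le_mul_of_nonneg_left (hO1 j) (mul_nonneg hc1 hc2)
          rw [← mul_assoc, hB]
          linarith
      · rw [pprrStep_eq_self hU]; exact ih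
  have hfin := hinv n
  refine Real.sSup_le ?_ (hO0.trans hBO)
  rintro _ ⟨j, rfl⟩
  exact (hfin.C_le j).trans hfin.t_le

end UpperBound

/-- Let `m ≥ 2` and `α ≥ 1` be such that `(m−1)α²` is an integer.  Then every
non-clairvoyant algorithm for preemptive scheduling with prediction on `m` identical
machines has competitive ratio at least `2 − 1/m − (m−1)/(mα²)`; consequently the PPRR
algorithm, whose makespan is at most `(2 − 1/m − (m−1)/(mα²)) · OPT` on every instance
with prediction error at most `α`, is optimal for such `α`. -/
theorem pre_lower_bound_integral_and_pprr_optimal (m : ℕ) (hm : 2 ≤ m) (α : ℝ)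
    (hα : 1 ≤ α) (hint : ∃ k : ℕ, ((m : ℝ) - 1) * α ^ 2 = k) :
    (∀ A : PreAlg m, ∀ ε : ℝ, 0 < ε → ∃ (n : ℕ) (p q : Fin n → ℝ),
        (∀ j, 0 < p j) ∧ (∀ j, 0 < q j) ∧ PredErrLe α p q ∧
        (2 - 1 / (m : ℝ) - ((m : ℝ) - 1) / ((m : ℝ) * α ^ 2) - ε) * OPTpre m n p
          < preMakespan A n q p) ∧
    (∀ (n : ℕ) (p q : Fin n → ℝ),
        (∀ j, 0 < p j) → (∀ j, 0 < q j) → PredErrLe α p q →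
        pprrMakespan m n q p
          ≤ (2 - 1 / (m : ℝ) - ((m : ℝ) - 1) / ((m : ℝ) * α ^ 2)) * OPTpre m n p) := by
  refine ⟨fun A ε hε => ?_, fun n p q hp hq herr => pprr_le hm hα hp hq herr⟩
  obtain ⟨k, hk⟩ := hint
  obtain ⟨p, q, hp, hq, herr, hopt, hle⟩ := exists_bad_instance A hm hα hk
  refine ⟨k + 1, p, q, hp, hq, herr, lt_of_lt_of_le ?_ hle⟩
  exact mul_lt_mul_of_pos_right (by linarith) hopt
end
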